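/- Assume k ≥ 1. Let A ≤ B be finite-dimensional subspaces of V such that B ≠ Rad(B) and 1 ≤ codim_A(A ∩ Rad(V)) < codim_B(Rad(B)), i.e. dim A − dim(A ∩ Rad(V)) is at least 1 and strictly less than dim B − dim Rad(B). Then the age of (V, β) does not satisfy the Ramsey property with respect to copies of A in copies of B: there exist r ∈ ℕ and a coloring ξ from the set of subspaces of V isometric to A into r colors such that every subspace B' ≤ V isometric to B contains two subspaces, each isometric to A, receiving different ξ-colors. -/

import Mathlib

open Module Submodule

/-- Two subspaces `X, Y` of `V` are isometric with respect to the bilinear form `β`. -/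
def IsIsometric {V : Type*} [AddCommGroup V] [Module (ZMod 2) V]
    (β : V →ₗ[ZMod 2] V →ₗ[ZMod 2] ZMod 2) (X Y : Submodule (ZMod 2) V) : Prop :=
  ∃ f : X ≃ₗ[ZMod 2] Y, ∀ x y : X, β (x : V) (y : V) = β (f x : V) (f y : V)

/-- The radical of a subspace `X` with respect to the bilinear form `β`. -/
def srad {V : Type*} [AddCommGroup V] [Module (ZMod 2) V]
    (β : V →ₗ[ZMod 2] V →ₗ[ZMod 2] ZMod 2) (X : Submodule (ZMod 2) V) :
    Submodule (ZMod 2) V :=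
  X ⊓ (⨅ y ∈ X, LinearMap.ker (β.flip y))

section FormLemmas

variable {V : Type*} [AddCommGroup V] [Module (ZMod 2) V]
  {β : V →ₗ[ZMod 2] V →ₗ[ZMod 2] ZMod 2}

theorem IsIsometric.symm {X Y : Submodule (ZMod 2) V} (h : IsIsometric β X Y) :
    IsIsometric β Y X := by
  obtain ⟨f, hf⟩ := h
  exact ⟨f.symm, fun x y => by simp [hf]⟩

theorem IsIsometric.trans {X Y Z : Submodule (ZMod 2) V} (h : IsIsometric β X Y)
    (h' : IsIsometric β Y Z) : IsIsometric β X Z := by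
  obtain ⟨f, hf⟩ := h
  obtain ⟨g, hg⟩ := h'
  exact ⟨f.trans g, fun x y => by simp [hf, hg]⟩

theorem mem_srad {X : Submodule (ZMod 2) V} {x : V} :
    x ∈ srad β X ↔ x ∈ X ∧ ∀ y ∈ X, β x y = 0 := by
  simp [srad, Submodule.mem_iInf]

theorem bilin_comm_of_alternating (halt : ∀ v : V, β v v = 0) (x y : V) : β x y = β y x := by
  have h := halt (x + y)
  simp only [map_add, LinearMap.add_apply, halt, zero_add, add_zero] at h
  exact (CharTwo.add_eq_zero.mp h).symm

/-- A linear map that is injective and isometric on `X` gives an isometric copy of `X`. -/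
theorem isIsometric_map (g : V →ₗ[ZMod 2] V) {X : Submodule (ZMod 2) V}
    (hinj : ∀ x ∈ X, g x = 0 → x = 0) (hg : ∀ x ∈ X, ∀ y ∈ X, β (g x) (g y) = β x y) :
    IsIsometric β (X.map g) X := by
  have hinj' : Function.Injective (g.domRestrict X) := by
    rw [← LinearMap.ker_eq_bot, LinearMap.ker_eq_bot']
    intro x hx
    exact Subtype.ext (hinj x x.2 hx)
  have hr : LinearMap.range (g.domRestrict X) = X.map g := LinearMap.range_domRestrict _ _
  refine IsIsometric.symm ⟨(LinearEquiv.ofInjective _ hinj').trans (LinearEquiv.ofEq _ _ hr), ?_⟩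
  intro x y
  exact (hg x x.2 y y.2).symm

/-- The symplectic transvection along `u`. -/
def sympTransvection (β : V →ₗ[ZMod 2] V →ₗ[ZMod 2] ZMod 2) (u : V) : V →ₗ[ZMod 2] V :=
  LinearMap.id + (β u).smulRight u

theorem sympTransvection_apply (u x : V) : sympTransvection β u x = x + β u x • u := rfl

theorem bilin_sympTransvection (halt : ∀ v : V, β v v = 0) (u x y : V) :
    β (sympTransvection β u x) (sympTransvection β u y) = β x y := by
  simp only [sympTransvection_apply, map_add, map_smul, LinearMap.add_apply,
    LinearMap.smul_apply, smul_eq_mul, halt, bilin_comm_of_alternating halt x u]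
  have h := CharTwo.add_self_eq_zero (β u x * β u y)
  linear_combination h

theorem sympTransvection_eq_zero (halt : ∀ v : V, β v v = 0) {u x : V}
    (h : sympTransvection β u x = 0) : x = 0 := by
  have hx : β u x = 0 := by
    have := congrArg (β u) h
    simpa [sympTransvection_apply, halt] using this
  simpa [sympTransvection_apply, hx] using h

theorem eq_one_of_ne_zero_zmod_two {c : ZMod 2} (h : c ≠ 0) : c = 1 := by
  revert c; decide

/-- If `X ≤ Y` is neither radical in `Y` nor spans `Y` modulo `ker β`, then a transvection of `Y`
moves `X` modulo `ker β`. -/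
theorem exists_isometric_sup_ker_ne (halt : ∀ v : V, β v v = 0) {X Y : Submodule (ZMod 2) V}
    (hXY : X ≤ Y) (hrad : ¬ X ≤ srad β Y) (hsup : ¬ Y ≤ X ⊔ LinearMap.ker β) :
    ∃ X' ≤ Y, IsIsometric β X' X ∧ X ⊔ LinearMap.ker β ≠ X' ⊔ LinearMap.ker β := by
  obtain ⟨u, hu, huX, a, ha, hau⟩ :
      ∃ u ∈ Y, u ∉ X ⊔ LinearMap.ker β ∧ ∃ a ∈ X, β u a ≠ 0 := by
    obtain ⟨u₁, hu₁, hu₁X⟩ := SetLike.not_le_iff_exists.mp hsup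
    obtain ⟨a, ha, har⟩ := SetLike.not_le_iff_exists.mp hrad
    obtain ⟨u₂, hu₂, hau₂⟩ : ∃ u ∈ Y, β u a ≠ 0 := by
      by_contra! hc
      exact har (mem_srad.mpr ⟨hXY ha, fun y hy => by
        rw [bilin_comm_of_alternating halt]; exact hc y hy⟩)
    by_cases h₂ : u₂ ∈ X ⊔ LinearMap.ker β
    · by_cases h₁ : β u₁ a = 0
      · refine ⟨u₁ + u₂, Y.add_mem hu₁ hu₂, ?_, a, ha, by simpa [h₁] using hau₂⟩
        rwa [Submodule.add_mem_iff_left _ h₂]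
      · exact ⟨u₁, hu₁, hu₁X, a, ha, h₁⟩
    · exact ⟨u₂, hu₂, h₂, a, ha, hau₂⟩
  refine ⟨X.map (sympTransvection β u), ?_, ?_, fun heq => huX ?_⟩
  · rintro _ ⟨x, hx, rfl⟩
    exact Y.add_mem (hXY hx) (Y.smul_mem _ hu)
  · exact isIsometric_map _ (fun x _ => sympTransvection_eq_zero halt)
      (fun x _ y _ => bilin_sympTransvection halt u x y)
  · have hmem : sympTransvection β u a ∈ X ⊔ LinearMap.ker β := by
      rw [heq]
      exact mem_sup_left (mem_map_of_mem ha)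
    rw [sympTransvection_apply, eq_one_of_ne_zero_zmod_two hau, one_smul] at hmem
    exact (Submodule.add_mem_iff_right _ (mem_sup_left ha)).mp hmem

/-- A nonzero subspace of the radical of `Y` has an isometric copy in `Y` outside the radical,
unless `Y` is totally isotropic. -/
theorem exists_isometric_not_le_srad (halt : ∀ v : V, β v v = 0) {X Y : Submodule (ZMod 2) V}
    (hX : X ≠ ⊥) (hXY : X ≤ srad β Y) (hY : ¬ Y ≤ srad β Y) :
    ∃ X' ≤ Y, IsIsometric β X' X ∧ ¬ X' ≤ srad β Y := by
  obtain ⟨h, hh, hhr⟩ := SetLike.not_le_iff_exists.mp hY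
  obtain ⟨a, ha, ha0⟩ := Submodule.exists_mem_ne_zero_of_ne_bot hX
  obtain ⟨φ, hφ⟩ : ∃ φ : Dual (ZMod 2) V, φ a ≠ 0 := by
    by_contra! hc
    exact ha0 ((Module.forall_dual_apply_eq_zero_iff (ZMod 2) a).mp hc)
  have hr : ∀ x ∈ X, ∀ y ∈ Y, β x y = 0 := fun x hx => (mem_srad.mp (hXY hx)).2
  refine ⟨X.map (LinearMap.id + φ.smulRight h), ?_, isIsometric_map _ ?_ ?_, fun hle => hhr ?_⟩
  · rintro _ ⟨x, hx, rfl⟩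
    exact Y.add_mem (mem_srad.mp (hXY hx)).1 (Y.smul_mem _ hh)
  · intro x hx hx0
    simp only [LinearMap.add_apply, LinearMap.id_apply, LinearMap.smulRight_apply] at hx0
    by_cases hc : φ x = 0
    · simpa [hc] using hx0
    · rw [eq_one_of_ne_zero_zmod_two hc, one_smul] at hx0
      refine absurd ?_ hhr
      rw [← neg_eq_of_add_eq_zero_right hx0]
      exact neg_mem (hXY hx)
  · intro x hx y hy
    have h₁ := hr x hx h hh
    have h₂ := hr y hy h hh
    rw [bilin_comm_of_alternating halt] at h₂
    simp [halt, h₁, h₂]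
  · have hm := hle (mem_map_of_mem ha)
    simp only [LinearMap.add_apply, LinearMap.id_apply, LinearMap.smulRight_apply,
      eq_one_of_ne_zero_zmod_two hφ, one_smul] at hm
    exact (Submodule.add_mem_iff_right _ (hXY ha)).mp hm

/-- If an isometric copy of `A` spans a copy of `B` modulo `ker β`, then the rank of the form on
`B` is at most the codimension of `A ⊓ ker β` in `A`. -/
theorem finrank_sub_finrank_srad_le (halt : ∀ v : V, β v v = 0)
    {A B A' B' : Submodule (ZMod 2) V} [FiniteDimensional (ZMod 2) A]
    [FiniteDimensional (ZMod 2) B] (hA : IsIsometric β A A') (hB : IsIsometric β B B')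
    (hsup : B' ≤ A' ⊔ LinearMap.ker β) :
    finrank (ZMod 2) B - finrank (ZMod 2) (srad β B) ≤
      finrank (ZMod 2) A - finrank (ZMod 2) ↥(A ⊓ LinearMap.ker β) := by
  obtain ⟨f, hf⟩ := hA
  obtain ⟨g, hg⟩ := hB
  let T : A →ₗ[ZMod 2] B →ₗ[ZMod 2] ZMod 2 :=
    β.compl₁₂ (A'.subtype ∘ₗ f.toLinearMap) (B'.subtype ∘ₗ g.toLinearMap)
  let S : B →ₗ[ZMod 2] B →ₗ[ZMod 2] ZMod 2 := β.compl₁₂ B.subtype B.subtype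
  have hle : LinearMap.range S ≤ LinearMap.range T := by
    rintro _ ⟨b, rfl⟩
    obtain ⟨a, ha, z, hz, hab⟩ := mem_sup.mp (hsup (g b).2)
    refine ⟨f.symm ⟨a, ha⟩, ?_⟩
    ext c
    have hz' : β z = 0 := hz
    simp [T, S, hg, ← hab, hz']
  have hkS : finrank (ZMod 2) (LinearMap.ker S) = finrank (ZMod 2) (srad β B) := by
    have : LinearMap.ker S = (srad β B).comap B.subtype := by
      ext x
      simp [S, mem_srad, LinearMap.ext_iff]
    rw [this]
    exact (comapSubtypeEquivOfLe inf_le_left).finrank_eq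
  have hkT : finrank (ZMod 2) ↥(A ⊓ LinearMap.ker β) ≤ finrank (ZMod 2) (LinearMap.ker T) := by
    rw [← (comapSubtypeEquivOfLe (inf_le_left : A ⊓ LinearMap.ker β ≤ A)).finrank_eq]
    refine finrank_mono fun x hx => ?_
    have hx' : β x = 0 := hx.2
    rw [LinearMap.mem_ker]
    ext c
    obtain ⟨a, ha, z, hz, hab⟩ := mem_sup.mp (hsup (g c).2)
    have hz' : β z = 0 := hz
    have h₁ : β (f x) a = 0 := by
      have := hf x (f.symm ⟨a, ha⟩)
      simpa [hx'] using this.symm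
    have h₂ : β (f x) z = 0 := by rw [bilin_comm_of_alternating halt, hz']; rfl
    simp [T, ← hab, h₁, h₂]
  have hS := LinearMap.finrank_range_add_finrank_ker S
  have hT := LinearMap.finrank_range_add_finrank_ker T
  have hST := finrank_mono hle
  omega

end FormLemmas

/-- `V` is a countably infinite dimensional space over `GF(2)` with an alternating form
`β`, `V = V1 ⊕ Rad(V)` where `V1` is an orthogonal sum of `k ≥ 1` hyperbolic planes and
`Rad(V) = ker β` is infinite dimensional.  If `A ≤ B` are finite dimensional subspaces
with `B ≠ Rad(B)` and `1 ≤ dim A − dim(A ∩ Rad(V)) < dim B − dim Rad(B)`, then the age of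
`(V, β)` does not satisfy the Ramsey property with respect to copies of `A` in copies of
`B`: some finite coloring of the copies of `A` is non-monochromatic on every isometric
copy of `B` in `V`. -/
theorem not_ramsey_when_codims_differ
    (k : ℕ) (hk : 1 ≤ k)
    (V : Type*) [AddCommGroup V] [Module (ZMod 2) V]
    (β : V →ₗ[ZMod 2] V →ₗ[ZMod 2] ZMod 2)
    (halt : ∀ v : V, β v v = 0)
    (e estar : Fin k → V)
    (hef : ∀ i j, β (e i) (estar j) = if i = j then 1 else 0)
    (hee : ∀ i j, β (e i) (e j) = 0)
    (hff : ∀ i j, β (estar i) (estar j) = 0)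
    (hrank : Module.rank (ZMod 2) V = Cardinal.aleph0)
    (hcompl : IsCompl (span (ZMod 2) (Set.range e ∪ Set.range estar)) (LinearMap.ker β))
    (hradinf : ¬ FiniteDimensional (ZMod 2) (LinearMap.ker β))
    (A B : Submodule (ZMod 2) V)
    (hAB : A ≤ B)
    (hAfin : FiniteDimensional (ZMod 2) A) (hBfin : FiniteDimensional (ZMod 2) B)
    (hBne : B ≠ srad β B)
    (hge1 : 1 ≤ finrank (ZMod 2) A - finrank (ZMod 2) ↥(A ⊓ LinearMap.ker β))
    (hlt : finrank (ZMod 2) A - finrank (ZMod 2) ↥(A ⊓ LinearMap.ker β) <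
      finrank (ZMod 2) B - finrank (ZMod 2) ↥(srad β B)) :
    ∃ (r : ℕ) (ξ : Submodule (ZMod 2) V → Fin r),
      ∀ B' : Submodule (ZMod 2) V, IsIsometric β B' B →
        ∃ A' A'' : Submodule (ZMod 2) V,
          A' ≤ B' ∧ A'' ≤ B' ∧ IsIsometric β A' A ∧ IsIsometric β A'' A ∧
          ξ A' ≠ ξ A'' := by
  have hfin : Finite (V ⧸ LinearMap.ker β) := by
    have hf : Module.Finite (ZMod 2) (span (ZMod 2) (Set.range e ∪ Set.range estar)) :=
      FiniteDimensional.span_of_finite _ ((Set.finite_range e).union (Set.finite_range estar))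
    have : Module.Finite (ZMod 2) (V ⧸ LinearMap.ker β) :=
      Module.Finite.equiv (quotientEquivOfIsCompl _ _ hcompl.symm).symm
    exact Module.finite_of_finite (ZMod 2)
  obtain ⟨r, ⟨c⟩⟩ := Finite.exists_equiv_fin (Submodule (ZMod 2) (V ⧸ LinearMap.ker β))
  refine ⟨r, fun X => c (X.map (LinearMap.ker β).mkQ), fun B' hB' => ?_⟩
  have hcol : ∀ {X Y : Submodule (ZMod 2) V}, X ⊔ LinearMap.ker β ≠ Y ⊔ LinearMap.ker β →
      c (X.map (LinearMap.ker β).mkQ) ≠ c (Y.map (LinearMap.ker β).mkQ) := by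
    intro X Y hne heq
    have h := congrArg (comap (LinearMap.ker β).mkQ) (c.injective heq)
    rw [comap_map_mkQ, comap_map_mkQ] at h
    exact hne (by rw [sup_comm, h, sup_comm])
  have hB'rad : ¬ B' ≤ srad β B' := by
    intro h
    obtain ⟨g, hg⟩ := hB'.symm
    refine hBne (le_antisymm (fun x hx => mem_srad.mpr ⟨hx, fun y hy => ?_⟩) inf_le_left)
    rw [hg ⟨x, hx⟩ ⟨y, hy⟩]
    exact (mem_srad.mp (h (g _).2)).2 _ (g _).2
  obtain ⟨A₀, hA₀, hA₀A, hA₀rad⟩ :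
      ∃ A₀ ≤ B', IsIsometric β A₀ A ∧ ¬ A₀ ≤ srad β B' := by
    obtain ⟨g, hg⟩ := hB'.symm
    let j : A →ₗ[ZMod 2] V := B'.subtype ∘ₗ g.toLinearMap ∘ₗ inclusion hAB
    have hj : Function.Injective j :=
      B'.injective_subtype.comp (g.injective.comp (inclusion_injective hAB))
    have hjA : IsIsometric β (LinearMap.range j) A :=
      IsIsometric.symm ⟨LinearEquiv.ofInjective j hj,
        fun x y => hg (inclusion hAB x) (inclusion hAB y)⟩
    have hjB : LinearMap.range j ≤ B' := by
      rintro _ ⟨x, rfl⟩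
      exact (g _).2
    by_cases hrad : LinearMap.range j ≤ srad β B'
    · have hne : LinearMap.range j ≠ ⊥ := by
        intro h
        have := LinearMap.finrank_range_of_inj hj
        rw [h, finrank_bot] at this
        omega
      obtain ⟨X, hX, hXj, hXr⟩ := exists_isometric_not_le_srad halt hne hrad hB'rad
      exact ⟨X, hX, hXj.trans hjA, hXr⟩
    · exact ⟨_, hjB, hjA, hrad⟩
  obtain ⟨A₁, hA₁, hA₁A₀, hne⟩ := exists_isometric_sup_ker_ne halt hA₀ hA₀rad fun hsup =>
    absurd (finrank_sub_finrank_srad_le halt hA₀A.symm hB'.symm hsup) (not_le.mpr hlt)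
  exact ⟨A₀, A₁, hA₀, hA₁, hA₀A, hA₁A₀.trans hA₀A, hcol hne⟩
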